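/- arXiv:2502.08153 — 3 statements merged into one kernel-verified Lean document; each statement's English description precedes it below -/
import Mathlib

section
/- Let R be a Noetherian regular integral domain and let a, b be nonzero elements of R such that the principal divisors div(a) and div(b) on Spec(R) have no common prime divisor (equivalently, there is no height-one prime ideal of R containing both a and b). Then the ideal of R[t] generated by a·t + b is a prime ideal. -/
/-- A commutative noetherian local ring is regular if its maximal ideal is generated by
`dim` many elements, where `dim` is the Krull dimension. -/
def IsRegularLocal (A : Type*) [CommRing A] [IsLocalRing A] : Prop :=
  ∃ s : Finset A, Ideal.span (s : Set A) = IsLocalRing.maximalIdeal A ∧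
    (s.card : WithBot ℕ∞) = ringKrullDim A

open IsLocalRing in
/-- If the maximal ideal `m` is generated by a finite set `s` and `x ∈ m \ m ^ 2`, then `x` can be
exchanged with an element of `s`. -/
lemma exists_mem_span_insert_erase_eq_maximalIdeal {R : Type*} [CommRing R] [IsLocalRing R]
    [DecidableEq R] {s : Finset R} (hs : Ideal.span (s : Set R) = maximalIdeal R) {x : R}
    (hx : x ∈ maximalIdeal R) (hx2 : x ∉ maximalIdeal R ^ 2) :
    ∃ y ∈ s, maximalIdeal R = Ideal.span (insert x (s.erase y : Set R)) := by
  have hsm (z) (hz : z ∈ s) : z ∈ maximalIdeal R := hs ▸ Ideal.subset_span hz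
  obtain ⟨c, hc⟩ := Submodule.mem_span_finset'.mp (hs ▸ hx : x ∈ Ideal.span (s : Set R))
  obtain ⟨y, hy⟩ : ∃ y, IsUnit (c y) := by
    by_contra! h
    refine hx2 (hc ▸ Ideal.sum_mem _ fun y _ ↦ ?_)
    rw [pow_two]
    exact Ideal.mul_mem_mul ((mem_maximalIdeal _).mpr (h y)) (hsm _ y.2)
  refine ⟨y, y.2, le_antisymm ?_ ?_⟩
  · set J := Ideal.span (insert x (s.erase (y : R) : Set R))
    have herase (z : R) (hz : z ∈ s) (hzy : z ≠ y) : z ∈ J :=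
      Ideal.subset_span (Or.inr (by simpa using ⟨hz, hzy⟩))
    have hyJ : (y : R) ∈ J := by
      rw [← Ideal.unit_mul_mem_iff_mem J hy]
      rw [← Finset.add_sum_erase _ _ (Finset.mem_univ y)] at hc
      rw [show c y * (y : R) = x - ∑ z ∈ Finset.univ.erase y, c z • (z : R) by
        rw [← hc, smul_eq_mul]; ring]
      refine J.sub_mem (Ideal.subset_span (Or.inl rfl)) (J.sum_mem fun z hz ↦ ?_)
      exact J.mul_mem_left _ (herase z z.2 fun h ↦ (Finset.mem_erase.mp hz).1 (Subtype.ext h))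
    rw [← hs, Ideal.span_le]
    intro z hz
    by_cases hzy : z = y
    · exact hzy ▸ hyJ
    · exact herase z hz hzy
  · rw [Ideal.span_le, Set.insert_subset_iff]
    exact ⟨hx, fun z hz ↦ hsm z (Finset.mem_of_mem_erase hz)⟩

open IsLocalRing in
/-- The quotient of a regular local ring by an element of `m \ m ^ 2` is regular. -/
lemma IsRegularLocal.quotient_span_singleton {R : Type*} [CommRing R] [IsLocalRing R]
    [IsNoetherianRing R] (h : IsRegularLocal R) {x : R} (hx : x ∈ maximalIdeal R)
    (hx2 : x ∉ maximalIdeal R ^ 2) [IsLocalRing (R ⧸ Ideal.span {x})] :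
    IsRegularLocal (R ⧸ Ideal.span {x}) ∧
      ringKrullDim R = ringKrullDim (R ⧸ Ideal.span {x}) + 1 := by
  classical
  obtain ⟨s, hs, hcard⟩ := h
  obtain ⟨y, hy, hm⟩ := exists_mem_span_insert_erase_eq_maximalIdeal hs hx hx2
  let f := Ideal.Quotient.mk (Ideal.span {x})
  have hf : Function.Surjective f := Ideal.Quotient.mk_surjective
  have hgen : Ideal.span ((s.erase y).image f : Set (R ⧸ Ideal.span {x})) =
      maximalIdeal (R ⧸ Ideal.span {x}) := by
    have hfx : f x = 0 := Ideal.Quotient.eq_zero_iff_mem.mpr (Ideal.mem_span_singleton_self x)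
    have hmap : (maximalIdeal R).map f = maximalIdeal (R ⧸ Ideal.span {x}) := by
      have : IsLocalHom f := IsLocalHom.of_surjective f hf
      rw [← ((local_hom_TFAE f).out 0 4 rfl rfl).mp this]
      exact Ideal.map_comap_of_surjective f hf _
    rw [← hmap, hm, Ideal.map_span, Set.image_insert_eq, hfx, Finset.coe_image]
    exact Submodule.span_insert_zero.symm
  have hle : ringKrullDim (R ⧸ Ideal.span {x}) ≤ (((s.erase y).image f).card : WithBot ℕ∞) := by
    refine (ringKrullDim_le_spanFinrank_maximalIdeal _).trans ?_
    rw [← hgen, Nat.cast_le]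
    refine (Submodule.spanFinrank_span_le_ncard_of_finite (Finset.finite_toSet _)).trans ?_
    rw [Set.ncard_coe_finset]
  have hdim : ringKrullDim R ≤ ringKrullDim (R ⧸ Ideal.span {x}) + 1 := by
    have := ringKrullDim_le_ringKrullDim_quotient_add_card ({x} : Finset R)
      (by simpa [ringJacobson_eq_maximalIdeal] using hx)
    rwa [Finset.coe_singleton, Finset.card_singleton, Nat.cast_one] at this
  have hle' := ((s.erase y).card_image_le (f := f)).trans_eq (Finset.card_erase_of_mem hy)
  have hpos := Finset.card_pos.mpr ⟨y, hy⟩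
  obtain ⟨k, hk⟩ : ∃ k : ℕ, ringKrullDim (R ⧸ Ideal.span {x}) = k :=
    finiteRingKrullDim_iff_ne_bot_and_top.mp inferInstance |> fun h ↦ by
      lift ringKrullDim (R ⧸ Ideal.span {x}) to ℕ∞ using h.1 with d
      lift d to ℕ using by simpa using h.2
      exact ⟨d, rfl⟩
  rw [← hcard] at hdim ⊢
  rw [hk] at hle hdim ⊢
  norm_cast at hle hdim ⊢
  refine ⟨⟨(s.erase y).image f, hgen, ?_⟩, by lia⟩
  rw [hk]
  norm_cast
  lia

open IsLocalRing in
lemma IsLocalRing.maximalIdeal_eq_bot_of_le_sq {R : Type*} [CommRing R] [IsLocalRing R]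
    [IsNoetherianRing R] (h : maximalIdeal R ≤ maximalIdeal R ^ 2) : maximalIdeal R = ⊥ :=
  Submodule.eq_bot_of_le_smul_of_le_jacobson_bot (maximalIdeal R) _
    (IsNoetherian.noetherian _) (by rwa [smul_eq_mul, ← pow_two]) (maximalIdeal_le_jacobson _)

/-- The quotient of a local ring by a nonunit is local. -/
lemma IsLocalRing.quotient_span_singleton {R : Type*} [CommRing R] [IsLocalRing R] {x : R}
    (hx : x ∈ IsLocalRing.maximalIdeal R) : IsLocalRing (R ⧸ Ideal.span {x}) := by
  have : Nontrivial (R ⧸ Ideal.span {x}) := Ideal.Quotient.nontrivial_iff.mpr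
    fun ht ↦ (IsLocalRing.mem_maximalIdeal x).mp hx (Ideal.span_singleton_eq_top.mp ht)
  exact .of_surjective' (Ideal.Quotient.mk _) Ideal.Quotient.mk_surjective

/-- If `x` generates a prime ideal of a Noetherian local ring and lies in no minimal prime, then
the ring is a domain. -/
lemma IsLocalRing.isDomain_of_isPrime_span_singleton {R : Type*} [CommRing R] [IsLocalRing R]
    [IsNoetherianRing R] {x : R} [(Ideal.span {x}).IsPrime] (hx : ∀ p ∈ minimalPrimes R, x ∉ p) :
    IsDomain R := by
  obtain ⟨p, hp, hpx⟩ := Ideal.exists_minimalPrimes_le (bot_le : ⊥ ≤ Ideal.span {x})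
  have hprime : p.IsPrime := hp.1.1
  have hle : p ≤ Ideal.span {x} • p := fun z hz ↦ by
    obtain ⟨w, rfl⟩ := Ideal.mem_span_singleton.mp (hpx hz)
    exact Ideal.mul_mem_mul (Ideal.mem_span_singleton_self x)
      ((hprime.mem_or_mem hz).resolve_left (hx p hp))
  have hbot : p = ⊥ := Submodule.eq_bot_of_le_smul_of_le_jacobson_bot _ p
    (IsNoetherian.noetherian _) hle
    ((IsLocalRing.le_maximalIdeal Ideal.IsPrime.ne_top').trans
      (IsLocalRing.maximalIdeal_le_jacobson _))
  exact @IsDomain.of_bot_isPrime R _ (hbot ▸ hprime)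

open IsLocalRing in
/-- A Noetherian regular local ring is a domain. -/
lemma IsRegularLocal.isDomain {R : Type*} [CommRing R] [IsLocalRing R]
    [IsNoetherianRing R] (h : IsRegularLocal R) : IsDomain R := by
  obtain ⟨n, hn⟩ : ∃ n : ℕ, ringKrullDim R = n := 
    let ⟨s, _, hs⟩ := h; ⟨s.card, hs.symm⟩
  induction n generalizing R with
  | zero =>
    obtain ⟨s, hs, hcard⟩ := h
    rw [hn, Nat.cast_inj, Finset.card_eq_zero] at hcard
    subst hcard
    exact (isField_iff_maximalIdeal_eq.mpr (by simpa using hs.symm)).isDomain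
  | succ n ih =>
    have hm2 : ¬ maximalIdeal R ≤ maximalIdeal R ^ 2 := fun hle ↦ by
      have := maximalIdeal_height_eq_ringKrullDim (R := R)
      rw [maximalIdeal_eq_bot_of_le_sq hle, Ideal.height_bot, hn] at this
      norm_cast at this
    have hmin (p) (hp : p ∈ minimalPrimes R) : ¬ maximalIdeal R ≤ p := fun hle ↦ by
      have hprime : p.IsPrime := hp.1.1
      have := maximalIdeal_height_eq_ringKrullDim (R := R)
      rw [le_antisymm hle (le_maximalIdeal hprime.ne_top), Ideal.height_eq_zero_iff.mpr hp,
        hn] at this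
      norm_cast at this
    have hfin := minimalPrimes.finite_of_isNoetherianRing R
    have havoid := (Ideal.subset_union_prime (s := insert (maximalIdeal R ^ 2) hfin.toFinset)
      (f := id) (I := maximalIdeal R) (maximalIdeal R ^ 2) (maximalIdeal R ^ 2)
      fun p hp hp2 _ ↦ by
        simp only [Finset.mem_insert, hp2, false_or, Set.Finite.mem_toFinset] at hp
        exact hp.1.1).not.mpr (by simpa [hm2] using hmin)
    obtain ⟨x, hx, hxn⟩ := Set.not_subset.mp havoid
    simp only [Finset.coe_insert, Set.Finite.coe_toFinset, Set.biUnion_insert, id, Set.mem_union,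
      Set.mem_iUnion, not_or, not_exists] at hxn
    have := IsLocalRing.quotient_span_singleton hx
    obtain ⟨hreg, hdim⟩ := h.quotient_span_singleton hx hxn.1
    have hdimQ : ringKrullDim (R ⧸ Ideal.span {x}) = n := by
      rw [hn] at hdim
      obtain ⟨s, -, hcard⟩ := hreg
      rw [← hcard] at hdim ⊢
      norm_cast at hdim ⊢
      lia
    have := ih hreg hdimQ
    have : (Ideal.span {x}).IsPrime := (Ideal.Quotient.isDomain_iff_prime _).mp this
    exact isDomain_of_isPrime_span_singleton hxn.2

open IsLocalRing in
/-- A regular local domain in which the maximal ideal is associated to a principal ideal has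
dimension at most one. -/
lemma IsRegularLocal.ringKrullDim_le_one {A : Type*} [CommRing A] [IsDomain A] [IsLocalRing A]
    [IsNoetherianRing A] (h : IsRegularLocal A) {a d : A} (ha : a ≠ 0)
    (had : ¬ a ∣ d) (hm : ∀ z ∈ maximalIdeal A, a ∣ z * d) : ringKrullDim A ≤ 1 := by
  rw [← maximalIdeal_height_eq_ringKrullDim]
  by_cases hm2 : maximalIdeal A ≤ maximalIdeal A ^ 2
  · rw [maximalIdeal_eq_bot_of_le_sq hm2, Ideal.height_bot]
    simp
  obtain ⟨x, hx, hx2⟩ := SetLike.not_le_iff_exists.mp hm2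
  have hx0 : x ≠ 0 := fun h0 ↦ hx2 (h0 ▸ Ideal.zero_mem _)
  have := IsLocalRing.quotient_span_singleton hx
  have := (h.quotient_span_singleton hx hx2).1.isDomain
  have hp : Prime x := (Ideal.span_singleton_prime hx0).mp
    ((Ideal.Quotient.isDomain_iff_prime _).mp this)
  by_cases hle : maximalIdeal A ≤ Ideal.span {x}
  · have := (Ideal.height_mono hle).trans (Ideal.height_span_singleton_le_one hp.not_isUnit)
    exact_mod_cast this
  obtain ⟨y, hy, hyx⟩ := SetLike.not_le_iff_exists.mp hle
  obtain ⟨e, he⟩ := hm x hx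
  obtain ⟨f, hf⟩ := hm y hy
  have hxe : x ∣ e * y := ⟨f, mul_left_cancel₀ ha (by linear_combination x * hf - y * he)⟩
  obtain ⟨e', rfl⟩ := (hp.dvd_or_dvd hxe).resolve_right
    fun hxy ↦ hyx (Ideal.mem_span_singleton.mpr hxy)
  exact absurd ⟨e', mul_left_cancel₀ hx0 (by linear_combination he)⟩ had

/-- In a regular domain, if `a` and `b` lie in no common prime of height one, then `b` is a
nonzerodivisor modulo `a`. -/
lemma dvd_of_dvd_mul_of_forall_height_ne_one {R : Type*} [CommRing R] [IsDomain R]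
    [IsNoetherianRing R]
    (hreg : ∀ (p : Ideal R) (hp : p.IsPrime), IsRegularLocal (@Localization.AtPrime R _ p hp))
    {a b : R} (ha : a ≠ 0)
    (hdiv : ∀ p : Ideal R, p.IsPrime → a ∈ p → b ∈ p → p.height ≠ 1)
    {c : R} (hc : a ∣ b * c) : a ∣ c := by
  by_contra hac
  have hc0 : Ideal.Quotient.mk (Ideal.span {a}) c ≠ 0 := by
    rwa [Ne, Ideal.Quotient.eq_zero_iff_mem, Ideal.mem_span_singleton]
  obtain ⟨p, hp, hle⟩ := exists_le_isAssociatedPrime_of_isNoetherianRing R _ hc0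
  obtain ⟨hprime, d, hd⟩ := (isAssociatedPrime_iff).mp hp
  obtain ⟨d, rfl⟩ := Ideal.Quotient.mk_surjective d
  have hcolon (c z : R) : z ∈ (⊥ : Submodule R (R ⧸ Ideal.span {a})).colon
      {Ideal.Quotient.mk (Ideal.span {a}) c} ↔ a ∣ z * c := by
    rw [Submodule.mem_colon_singleton, Submodule.mem_bot, ← Ideal.mem_span_singleton,
      ← Ideal.Quotient.eq_zero_iff_mem, map_mul]
    rfl
  have hpd (z : R) : z ∈ p ↔ a ∣ z * d := by rw [hd, hcolon]
  have hap : a ∈ p := (hpd a).mpr (dvd_mul_right a d)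
  have hbp : b ∈ p := hle ((hcolon c b).mpr hc)
  let A := Localization.AtPrime p
  have hinj : Function.Injective (algebraMap R A) :=
    IsLocalization.injective A p.primeCompl_le_nonZeroDivisors
  have : IsDomain A := IsLocalization.isDomain_localization p.primeCompl_le_nonZeroDivisors
  have : IsNoetherianRing A := IsLocalization.isNoetherianRing p.primeCompl A inferInstance
  have hdim : ringKrullDim A ≤ 1 := by
    refine (hreg p hprime).ringKrullDim_le_one (a := algebraMap R A a) (d := algebraMap R A d)
      ((map_ne_zero_iff _ hinj).mpr ha) ?_ ?_
    · rintro ⟨q, hq⟩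
      obtain ⟨⟨r, s⟩, hrs⟩ := IsLocalization.surj p.primeCompl q
      refine s.2 ((hpd s).mpr ⟨r, hinj ?_⟩)
      rw [map_mul, map_mul, hq, ← hrs]
      ring
    · intro z hz
      rw [← Localization.AtPrime.map_eq_maximalIdeal] at hz
      have : p.map (algebraMap R A) ≤
          (Ideal.span {algebraMap R A a}).colon {algebraMap R A d} := by
        rw [Ideal.map_le_iff_le_comap]
        intro w hw
        rw [Ideal.mem_comap, Submodule.mem_colon_singleton, smul_eq_mul, ← map_mul,
          Ideal.mem_span_singleton]
        exact map_dvd _ ((hpd w).mp hw)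
      have := this hz
      rwa [Submodule.mem_colon_singleton, smul_eq_mul, Ideal.mem_span_singleton] at this
  rw [IsLocalization.AtPrime.ringKrullDim_eq_height p A] at hdim
  refine hdiv p hprime hap hbp (le_antisymm (by exact_mod_cast hdim) ?_)
  rw [Order.one_le_iff_ne_zero, Ne, Ideal.height_eq_zero_iff_eq_bot]
  rintro rfl
  exact ha hap

open Polynomial in
lemma aeval_neg_div_C_mul_X_add_C {R K : Type*} [CommRing R] [Field K] [Algebra R K] {a : R}
    (ha : algebraMap R K a ≠ 0) (b : R) :
    aeval (-algebraMap R K b / algebraMap R K a) (C a * X + C b) = 0 := by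
  simp [mul_div_cancel₀, ha]

open Polynomial in
/-- If multiplication by `b` is injective modulo `a`, then `a X + b` generates the ideal of
polynomials vanishing at `-b / a`. -/
lemma C_mul_X_add_C_dvd_of_aeval_eq_zero {R K : Type*} [CommRing R] [IsDomain R]
    [Field K] [Algebra R K] [FaithfulSMul R K] {a b : R} (ha : a ≠ 0)
    (hab : ∀ c, a ∣ b * c → a ∣ c) {f : R[X]}
    (hf : aeval (-algebraMap R K b / algebraMap R K a) f = 0) : C a * X + C b ∣ f := by
  have hinj := FaithfulSMul.algebraMap_injective R K
  have haK : algebraMap R K a ≠ 0 := (map_ne_zero_iff _ hinj).mpr ha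
  induction hn : f.natDegree using Nat.strong_induction_on generalizing f with
  | _ n ih =>
  obtain _ | n := n
  · rw [eq_C_of_natDegree_eq_zero hn, aeval_C, map_eq_zero_iff _ hinj] at hf
    rw [eq_C_of_natDegree_eq_zero hn, hf, C_0]
    exact dvd_zero _
  have hlead : a ∣ f.coeff (n + 1) := by
    have hroot := scaleRoots_aeval_eq_zero_of_aeval_div_eq_zero hinj
      (p := f) (r := -b) (s := a) (by rwa [map_neg]) (mem_nonZeroDivisors_of_ne_zero ha)
    rw [aeval_algebraMap_apply, map_eq_zero_iff _ hinj, coe_aeval_eq_eval, eval_eq_sum_range,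
      natDegree_scaleRoots, hn, Finset.sum_range_succ, coeff_scaleRoots, hn, Nat.sub_self,
      pow_zero, mul_one] at hroot
    have hsum : a ∣ ∑ i ∈ Finset.range (n + 1), (f.scaleRoots a).coeff i * (-b) ^ i := by
      refine Finset.dvd_sum fun i hi ↦ ?_
      rw [coeff_scaleRoots, hn]
      have : n + 1 - i ≠ 0 := by have := Finset.mem_range.mp hi; lia
      exact ((dvd_pow_self a this).mul_left _).mul_right _
    have hpow (k : ℕ) (hk : a ∣ b ^ k * f.coeff (n + 1)) : a ∣ f.coeff (n + 1) := by
      induction k with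
      | zero => simpa using hk
      | succ k ihk => exact ihk (hab _ (by rwa [← mul_assoc, ← pow_succ']))
    refine hpow (n + 1) ?_
    have := (dvd_add_right hsum).mp (hroot ▸ dvd_zero a)
    rwa [neg_pow, mul_left_comm, (isUnit_one.neg.pow _).dvd_mul_left, mul_comm] at this
  obtain ⟨g, hg⟩ := hlead
  rw [← dvd_sub_left (dvd_mul_left (C a * X + C b) (C g * X ^ n))]
  refine ih _ ?_ ?_ rfl
  · refine Nat.lt_succ_of_le (natDegree_le_pred (n := n + 1) ?_ ?_)
    · refine (natDegree_sub_le_of_le hn.le ?_).trans_eq (max_self _)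
      compute_degree
    · rw [show C g * X ^ n * (C a * X + C b) = C (a * g) * X ^ (n + 1) + C (g * b) * X ^ n by
        simp only [C_mul]; ring]
      rw [coeff_sub, coeff_add, coeff_C_mul_X_pow, coeff_C_mul_X_pow]
      simp [hg]
  · rw [map_sub, map_mul, aeval_neg_div_C_mul_X_add_C haK, hf, mul_zero, sub_zero]

/-- Let `R` be a Noetherian regular integral domain and `a, b` nonzero
elements of `R` such that no height-one prime ideal of `R` contains both `a` and `b`.
Then the ideal of `R[t]` generated by `a • t + b` is prime. -/
theorem stmt1 {R : Type*} [CommRing R] [IsDomain R] [IsNoetherianRing R]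
    (hreg : ∀ (p : Ideal R) (hp : p.IsPrime), IsRegularLocal (@Localization.AtPrime R _ p hp))
    (a b : R) (ha : a ≠ 0) (hb : b ≠ 0)
    (hdiv : ¬ ∃ (p : Ideal R) (hp : p.IsPrime),
      Order.height (⟨p, hp⟩ : PrimeSpectrum R) = 1 ∧ a ∈ p ∧ b ∈ p) :
    (Ideal.span {Polynomial.C a * Polynomial.X + Polynomial.C b}).IsPrime := by
  have hdvd (c : R) : a ∣ b * c → a ∣ c :=
    dvd_of_dvd_mul_of_forall_height_ne_one hreg ha fun p hp hap hbp hht ↦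
      hdiv ⟨p, hp, (PrimeSpectrum.height_eq_orderHeight ⟨p, hp⟩).symm.trans hht, hap, hbp⟩
  let K := FractionRing R
  have haK : algebraMap R K a ≠ 0 :=
    (map_ne_zero_iff _ (FaithfulSMul.algebraMap_injective R K)).mpr ha
  have hker : Ideal.span {Polynomial.C a * Polynomial.X + Polynomial.C b} =
      RingHom.ker (Polynomial.aeval (R := R) (-algebraMap R K b / algebraMap R K a)) := by
    refine le_antisymm ?_ fun f hf ↦ ?_
    · rw [Ideal.span_singleton_le_iff_mem, RingHom.mem_ker]
      exact aeval_neg_div_C_mul_X_add_C haK b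
    · exact Ideal.mem_span_singleton.mpr (C_mul_X_add_C_dvd_of_aeval_eq_zero ha hdvd hf)
  rw [hker]
  exact RingHom.ker_isPrime _
end

section
/- Let R be an integral domain of finite type over an algebraically closed field k, let χ₁, …, χ_r be units in R, and suppose the k-linear subspace of R spanned by χ₁, …, χ_r has dimension at least 2. Then there exists a nonempty (dense) open subset W of affine r-space over k such that for every k-point a = (a₁,…,a_r) in W, the element Σ a_l χ_l is not a unit of R. -/
/-- The image of a dominant morphism of finite presentation onto an integral affine scheme contains
a nonempty basic open subset. -/
theorem RingHom.FinitePresentation.exists_ne_zero_forall_mem_range_comap {A S : Type*}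
    [CommRing A] [IsDomain A] [CommRing S] {f : A →+* S} (hf : f.FinitePresentation)
    (hinj : Function.Injective f) :
    ∃ g : A, g ≠ 0 ∧ ∀ p : PrimeSpectrum A, g ∉ p.asIdeal →
      p ∈ Set.range (PrimeSpectrum.comap f) := by
  obtain ⟨D, hD⟩ := PrimeSpectrum.exists_constructibleSetData_iff.mpr
    (PrimeSpectrum.isConstructible_range_comap hf)
  have hbot : (⟨⊥, Ideal.isPrime_bot⟩ : PrimeSpectrum A) ∈ D.toSet := by
    obtain ⟨q, hq, hqf⟩ := Ideal.exists_comap_eq_of_mem_minimalPrimes_of_injective hinj ⊥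
      (by simp [IsDomain.minimalPrimes_eq_singleton_bot])
    rw [hD]
    exact ⟨⟨q, hq⟩, PrimeSpectrum.ext hqf⟩
  simp only [PrimeSpectrum.ConstructibleSetData.toSet, Set.mem_iUnion] at hbot
  obtain ⟨c, hc, hcV, hcf⟩ := hbot
  have hg : ∀ i, c.g i = 0 := by
    simpa [PrimeSpectrum.mem_zeroLocus, Set.range_subset_iff] using hcV
  refine ⟨c.f, by simpa [PrimeSpectrum.mem_zeroLocus] using hcf, fun p hp ↦ ?_⟩
  rw [← hD]
  refine Set.mem_biUnion hc ⟨?_, by simpa [PrimeSpectrum.mem_zeroLocus] using hp⟩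
  simp [PrimeSpectrum.mem_zeroLocus, Set.range_subset_iff, hg]

/-- Elements of a domain over an algebraically closed field are constant or transcendental. -/
theorem IsAlgClosed.mem_range_algebraMap_of_isAlgebraic {k R : Type*} [Field k] [IsAlgClosed k]
    [CommRing R] [IsDomain R] [Algebra k R] {x : R} (hx : IsAlgebraic k x) :
    x ∈ Set.range (algebraMap k R) := by
  have : Algebra.IsIntegral k (Algebra.adjoin k {x}) :=
    Algebra.IsIntegral.adjoin (by simpa using hx.isIntegral)
  obtain ⟨y, hy⟩ := (IsAlgClosed.algebraMap_bijective_of_isIntegral (k := k)).2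
    (⟨x, Algebra.self_mem_adjoin_singleton k x⟩ : Algebra.adjoin k {x})
  exact ⟨y, congr_arg Subtype.val hy⟩

/-- A polynomial over an infinite field vanishing outside a proper subspace is zero. -/
theorem MvPolynomial.eq_zero_of_forall_notMem_submodule {k ι : Type*} [Field k] [Infinite k]
    [Fintype ι] {N : Submodule k (ι → k)} (hN : N < ⊤) {p : MvPolynomial ι k}
    (hp : ∀ a, a ∉ N → eval a p = 0) : p = 0 := by
  classical
  obtain ⟨f, hf, hNf⟩ := N.exists_le_ker_of_lt_top hN
  let q : MvPolynomial ι k := ∑ l, C (f fun j ↦ if l = j then 1 else 0) * X l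
  have hq : ∀ a, eval a q = f a := fun a ↦ by
    simp only [q, map_sum, map_mul, eval_C, eval_X, LinearMap.pi_apply_eq_sum_univ f a,
      smul_eq_mul, mul_comm]
  have hpq : p * q = 0 := MvPolynomial.funext fun a ↦ by
    by_cases ha : a ∈ N
    · simp [hq, LinearMap.mem_ker.mp (hNf ha)]
    · simp [hp a ha]
  refine (mul_eq_zero.mp hpq).resolve_right fun h ↦ hf (LinearMap.ext fun a ↦ ?_)
  rw [← hq, h, map_zero, LinearMap.zero_apply]

/-- A polynomial over `k` vanishing on the hyperplane `∑ bₗ χₗ = 0` over `R` is zero. -/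
theorem MvPolynomial.eq_zero_of_forall_aeval_eq_zero_of_sum_eq_zero {k R ι : Type*} [Field k]
    [IsAlgClosed k] [CommRing R] [IsDomain R] [Algebra k R] [Fintype ι] (χ : ι → Rˣ)
    (hdim : 2 ≤ Module.finrank k (Submodule.span k (Set.range fun l => (χ l : R))))
    {p : MvPolynomial ι k}
    (hp : ∀ b : ι → R, ∑ l, b l * (χ l : R) = 0 → aeval b p = 0) : p = 0 := by
  classical
  have : Nonempty ι := by
    by_contra! h
    rw [Set.range_eq_empty, Submodule.span_empty, finrank_bot] at hdim
    omega
  obtain ⟨i⟩ := this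
  let L : (ι → k) →ₗ[k] R := Fintype.linearCombination k fun l ↦ (χ l : R)
  have hL : ∀ a, L a = ∑ l, a l • (χ l : R) := fun a ↦ Fintype.linearCombination_apply ..
  refine eq_zero_of_forall_notMem_submodule
    (N := (Submodule.span k {(χ i : R)}).comap L) (lt_top_iff_ne_top.mpr fun h ↦ ?_) fun a ha ↦ ?_
  · have hle : Submodule.span k (Set.range fun l => (χ l : R)) ≤ Submodule.span k {(χ i : R)} := by
      rw [← Fintype.range_linearCombination]
      exact LinearMap.range_le_iff_comap.mpr h
    have := (Submodule.finrank_mono hle).trans (finrank_span_le_card _)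
    rw [Set.toFinset_singleton, Finset.card_singleton] at this
    omega
  · let w : R := -(L a * ((χ i)⁻¹ : Rˣ))
    have hw : Transcendental k w := fun hw ↦ ha <| by
      obtain ⟨c, hc⟩ := IsAlgClosed.mem_range_algebraMap_of_isAlgebraic hw
      refine Submodule.mem_span_singleton.mpr ⟨-c, ?_⟩
      simp [Algebra.smul_def, hc, w]
    let q : Polynomial k := aeval (fun l ↦ Polynomial.C (a l) + (Pi.single i Polynomial.X : ι → Polynomial k) l) p
    have hq : q = 0 := by
      by_contra hq
      refine hw ⟨q, hq, ?_⟩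
      have hcomp : Polynomial.aeval w q =
          aeval (fun l ↦ algebraMap k R (a l) + (Pi.single i w : ι → R) l) p := by
        rw [← AlgHom.comp_apply, comp_aeval]
        congr! 3 with l
        by_cases h : l = i
        · subst h; simp
        · simp [h]
      rw [hcomp]
      refine hp _ ?_
      simp only [add_mul, Finset.sum_add_distrib, ← Algebra.smul_def, ← hL]
      rw [Finset.sum_eq_single i (by simp +contextual) (by simp)]
      simp [w]
    have h0 : Polynomial.aeval (0 : k) q = aeval a p := by
      rw [← AlgHom.comp_apply, comp_aeval]
      congr! 3 with l
      by_cases h : l = i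
      · subst h; simp
      · simp [h]
    rw [hq, map_zero] at h0
    rw [← coe_aeval_eq_eval]
    exact h0.symm

/-- Let `R` be an integral domain of finite type over an algebraically
closed field `k`, let `χ₁, …, χ_r` be units in `R` whose `k`-linear span has dimension
at least `2`. Then there is a nonempty Zariski-open subset `W` of affine `r`-space over
`k` (here: the nonvanishing locus of some nonzero polynomial `g`) such that for every
`k`-point `a ∈ W`, the element `∑ aₗ χₗ` is not a unit of `R`. -/
theorem stmt2 {k : Type*} [Field k] [IsAlgClosed k]
    {R : Type*} [CommRing R] [IsDomain R] [Algebra k R] (hft : Algebra.FiniteType k R)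
    (r : ℕ) (χ : Fin r → Rˣ)
    (hdim : 2 ≤ Module.finrank k (Submodule.span k (Set.range fun l => (χ l : R)))) :
    ∃ g : MvPolynomial (Fin r) k, g ≠ 0 ∧
      ∀ a : Fin r → k, MvPolynomial.eval a g ≠ 0 →
        ¬ IsUnit (∑ l, a l • (χ l : R)) := by
  let F : MvPolynomial (Fin r) R := ∑ l, MvPolynomial.X l * MvPolynomial.C (χ l : R)
  let π := Ideal.Quotient.mk (Ideal.span {F})
  let f : MvPolynomial (Fin r) k →+* MvPolynomial (Fin r) R ⧸ Ideal.span {F} :=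
    π.comp (MvPolynomial.map (algebraMap k R))
  have hinj : Function.Injective f := by
    refine (injective_iff_map_eq_zero f).mpr fun p hp ↦
      MvPolynomial.eq_zero_of_forall_aeval_eq_zero_of_sum_eq_zero χ hdim fun b hb ↦ ?_
    obtain ⟨h, hh⟩ := Ideal.mem_span_singleton.mp (Ideal.Quotient.eq_zero_iff_mem.mp hp)
    have hF : MvPolynomial.eval b F = 0 := by simpa [F] using hb
    rw [MvPolynomial.aeval_def, ← MvPolynomial.eval_map, hh, map_mul, hF, zero_mul]
  have hfin : f.FinitePresentation := by
    refine RingHom.FinitePresentation.of_finiteType.mp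
      (RingHom.FiniteType.of_comp_finiteType (f := MvPolynomial.C) ?_)
    have h1 : (algebraMap k R).FiniteType := RingHom.finiteType_algebraMap.mpr hft
    have h2 : (MvPolynomial.C : R →+* MvPolynomial (Fin r) R).FiniteType :=
      RingHom.finiteType_algebraMap.mpr inferInstance
    have h3 : π.FiniteType := RingHom.FiniteType.of_surjective _ Ideal.Quotient.mk_surjective
    convert h3.comp (h2.comp h1) using 1
    ext x
    simp [f]
  obtain ⟨g, hg, hgr⟩ := hfin.exists_ne_zero_forall_mem_range_comap hinj
  refine ⟨g, hg, fun a ha hu ↦ ?_⟩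
  obtain ⟨q, hq⟩ := hgr ⟨RingHom.ker (MvPolynomial.eval a), RingHom.ker_isPrime _⟩ ha
  have hmem : ∀ p, f p ∈ q.asIdeal ↔ MvPolynomial.eval a p = 0 := fun p ↦ by
    rw [← RingHom.mem_ker, ← Ideal.mem_comap]
    exact iff_of_eq (congr_arg (p ∈ PrimeSpectrum.asIdeal ·) hq)
  let ρ : R →+* MvPolynomial (Fin r) R ⧸ Ideal.span {F} := π.comp MvPolynomial.C
  have hF : π F = 0 := Ideal.Quotient.eq_zero_iff_mem.mpr (Ideal.mem_span_singleton_self F)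
  have hsum : ρ (∑ l, a l • (χ l : R)) =
      -∑ l, f (MvPolynomial.X l - MvPolynomial.C (a l)) * ρ (χ l) := by
    rw [eq_neg_iff_add_eq_zero, ← hF]
    simp [ρ, f, F, Algebra.smul_def, sub_mul]
  refine q.2.ne_top (Ideal.eq_top_of_isUnit_mem _ ?_ (hu.map ρ))
  rw [hsum]
  exact neg_mem (sum_mem fun l _ ↦ Ideal.mul_mem_right _ _ ((hmem _).mpr (by simp)))
end

section
/- Let f : X → Y be a quasi-compact morphism of schemes, let Z be the scheme-theoretic image of f, and let V ⊆ Y be an open subscheme. Then Z ∩ V (the open subscheme of Z lying over V) is the scheme-theoretic image of the restricted morphism f|_{f⁻¹(V)} : f⁻¹(V) → V. -/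
open CategoryTheory Limits AlgebraicGeometry

/-- `Z` (given by the closed immersion `i : Z ⟶ Y`) is the scheme-theoretic image of
`f : X ⟶ Y`:  it is the smallest closed subscheme of `Y` through which `f` factors. -/
structure IsSchemeTheoreticImage {X Y Z : Scheme} (f : X ⟶ Y) (i : Z ⟶ Y) : Prop where
  isClosedImmersion : IsClosedImmersion i
  factors : ∃ g : X ⟶ Z, g ≫ i = f
  isLeast : ∀ (W : Scheme) (j : W ⟶ Y), IsClosedImmersion j →
    (∃ h : X ⟶ W, h ≫ j = f) → ∃ l : Z ⟶ W, l ≫ j = i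

/-- A morphism and its scheme-theoretic image have the same kernel ideal sheaf. -/
theorem IsSchemeTheoreticImage.ker_eq {X Y Z : Scheme} {f : X ⟶ Y} {i : Z ⟶ Y}
    (h : IsSchemeTheoreticImage f i) : f.ker = i.ker := by
  obtain ⟨-, ⟨g, hg⟩, hmin⟩ := h
  obtain ⟨l, hl⟩ := hmin f.image f.imageι inferInstance ⟨f.toImage, f.toImage_imageι⟩
  apply le_antisymm
  · calc f.ker = f.imageι.ker := (Scheme.IdealSheafData.ker_subschemeι _).symm
      _ ≤ (l ≫ f.imageι).ker := Scheme.Hom.le_ker_comp l f.imageι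
      _ = i.ker := by rw [hl]
  · rw [← hg]
    exact Scheme.Hom.le_ker_comp g i

/-- The kernel ideal sheaf of the base change of a quasi-compact morphism along an open immersion
depends only on the kernel ideal sheaf of the morphism. -/
theorem ker_pullback_snd_eq_of_ker_eq {X Y Z U : Scheme} {f : X ⟶ Y} {i : Z ⟶ Y}
    [QuasiCompact f] [QuasiCompact i] (j : U ⟶ Y) [IsOpenImmersion j] (h : f.ker = i.ker) :
    (pullback.snd f j).ker = (pullback.snd i j).ker := by
  ext V : 2
  rw [Scheme.ker_ideal_of_isPullback_of_isOpenImmersion f _ _ j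
      (IsPullback.of_hasPullback f j).flip,
    Scheme.ker_ideal_of_isPullback_of_isOpenImmersion i _ _ j
      (IsPullback.of_hasPullback i j).flip, h]

/-- Let `f : X ⟶ Y` be a quasi-compact morphism of schemes, `Z` the
scheme-theoretic image of `f` and `V ⊆ Y` an open subscheme.  Then `Z ∩ V` is the
scheme-theoretic image of the restriction `f⁻¹(V) ⟶ V`. -/
theorem stmt4 {X Y Z : Scheme} (f : X ⟶ Y) [QuasiCompact f] (i : Z ⟶ Y)
    (h : IsSchemeTheoreticImage f i) (V : Y.Opens) :
    IsSchemeTheoreticImage (pullback.snd f V.ι) (pullback.snd i V.ι) := by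
  obtain ⟨hi, ⟨g, hg⟩, hmin⟩ := h
  have : IsClosedImmersion (pullback.snd i V.ι) := inferInstance
  refine ⟨this, ⟨pullback.lift (pullback.fst f V.ι ≫ g) (pullback.snd f V.ι)
    (by rw [Category.assoc, hg, pullback.condition]), pullback.lift_snd _ _ _⟩, ?_⟩
  rintro W j hj ⟨k, hk⟩
  have hker : j.ker ≤ (pullback.snd i V.ι).ker := by
    rw [← ker_pullback_snd_eq_of_ker_eq V.ι
      (IsSchemeTheoreticImage.ker_eq ⟨hi, ⟨g, hg⟩, hmin⟩), ← hk]
    exact Scheme.Hom.le_ker_comp k j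
  exact ⟨IsClosedImmersion.lift j _ hker, IsClosedImmersion.lift_fac j _ hker⟩
end
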